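/- Let Γ be a generalised hexagon of finite order (s,t) with s > 1 and t > 1, and let S be a set of s+1 points of Γ such that no point of Γ is opposite every member of S. Suppose p0, p1 ∈ S are opposite, and L is a line of Γ such that each of p0 and p1 is close to L and L contains no point of S. Then every point of S is close to L, and every point of L is collinear to exactly one point of S. -/

import Mathlib

/-- An incidence structure of points and lines, each line being a set of points. -/
structure GenHexagon where
  Point : Type
  Line : Type
  pts : Line → Set Point

namespace GenHexagon

variable (Γ : GenHexagon)

/-- Adjacency of the bipartite incidence graph on the disjoint union of points and lines:
a point is adjacent to a line iff the point lies on the line. -/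
def incAdj : Γ.Point ⊕ Γ.Line → Γ.Point ⊕ Γ.Line → Prop
  | Sum.inl x, Sum.inr L => x ∈ Γ.pts L
  | Sum.inr L, Sum.inl x => x ∈ Γ.pts L
  | _, _ => False

/-- The bipartite incidence graph. -/
def incGraph : SimpleGraph (Γ.Point ⊕ Γ.Line) where
  Adj := Γ.incAdj
  symm := ⟨by rintro (x | L) (y | M) h <;> simp_all [incAdj]⟩
  loopless := ⟨by rintro (x | L) h <;> simp_all [incAdj]⟩

/-- `Γ` is a generalised hexagon: its incidence graph has diameter `6` and girth `12`. -/
def IsGenHexagon : Prop :=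
  Γ.incGraph.ediam = 6 ∧ Γ.incGraph.egirth = 12

/-- Two points are collinear if they are distinct and some line contains both. -/
def Collinear (x y : Γ.Point) : Prop :=
  x ≠ y ∧ ∃ L, x ∈ Γ.pts L ∧ y ∈ Γ.pts L

/-- Two points are special if they are distinct, non-collinear, and collinear
to a common point. -/
def Special (x y : Γ.Point) : Prop :=
  x ≠ y ∧ ¬ Γ.Collinear x y ∧ ∃ z, Γ.Collinear x z ∧ Γ.Collinear y z

/-- Two points are opposite if they are distinct, non-collinear and non-special. -/
def Opposite (x y : Γ.Point) : Prop :=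
  x ≠ y ∧ ¬ Γ.Collinear x y ∧ ¬ Γ.Special x y

/-- `Γ` has order `(s, t)`: every line contains exactly `s + 1` points and every
point lies on exactly `t + 1` lines. -/
def HasOrder (s t : ℕ) : Prop :=
  (∀ L, (Γ.pts L).encard = s + 1) ∧ (∀ x, {L | x ∈ Γ.pts L}.encard = t + 1)

/-- `Γ` is thick: every line contains at least `3` points and every point lies on
at least `3` lines. -/
def Thick : Prop :=
  (∀ L, 3 ≤ (Γ.pts L).encard) ∧ (∀ x, 3 ≤ {L | x ∈ Γ.pts L}.encard)

/-- A point is close to a line if it is collinear to exactly one point of that line. -/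
def CloseTo (x : Γ.Point) (L : Γ.Line) : Prop :=
  ∃! y, y ∈ Γ.pts L ∧ Γ.Collinear x y

/-- Two lines are opposite if they are disjoint and no point of one is collinear to
a point of the other. -/
def OppLines (L M : Γ.Line) : Prop :=
  (∀ x ∈ Γ.pts L, x ∉ Γ.pts M) ∧
  (∀ x ∈ Γ.pts L, ∀ y ∈ Γ.pts M, ¬ Γ.Collinear x y)

/-- The distance-3 trace `[L,M]₃` of two (opposite) lines: the set of points close to
both `L` and `M`. -/
def trace3 (L M : Γ.Line) : Set Γ.Point :=
  {x | Γ.CloseTo x L ∧ Γ.CloseTo x M}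

/-- The distance-3 trace `[L,M]₃` is regular if `[N,M]₃ = [L,M]₃` for every line `N`
opposite `M` such that `[N,M]₃` and `[L,M]₃` share at least two points. -/
def RegularTrace3 (L M : Γ.Line) : Prop :=
  ∀ N, Γ.OppLines N M → (Γ.trace3 N M ∩ Γ.trace3 L M).Nontrivial →
    Γ.trace3 N M = Γ.trace3 L M

/-- A hyperbolic line: a set `H` of pairwise special points, all collinear to a common
point `p`, such that for every point `q` opposite `p` to which at least two points of `H`
are special, the set of points special to `q` and collinear to `p` equals `H`. -/
def IsHyperbolicLine (H : Set Γ.Point) : Prop :=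
  (∀ x ∈ H, ∀ y ∈ H, x ≠ y → Γ.Special x y) ∧
  ∃ p, (∀ x ∈ H, Γ.Collinear x p) ∧
    ∀ q, Γ.Opposite q p → {x ∈ H | Γ.Special q x}.Nontrivial →
      {x | Γ.Special q x ∧ Γ.Collinear x p} = H

/-- A round-up triple: no point of `Γ` is opposite exactly one of `x₁, x₂, x₃`. -/
def RoundUpTriple (x₁ x₂ x₃ : Γ.Point) : Prop :=
  ∀ y : Γ.Point,
    ¬ ((Γ.Opposite y x₁ ∧ ¬ Γ.Opposite y x₂ ∧ ¬ Γ.Opposite y x₃) ∨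
       (¬ Γ.Opposite y x₁ ∧ Γ.Opposite y x₂ ∧ ¬ Γ.Opposite y x₃) ∨
       (¬ Γ.Opposite y x₁ ∧ ¬ Γ.Opposite y x₂ ∧ Γ.Opposite y x₃))

/-- A geometric line: a set `T` of points such that each point of `Γ` is either opposite
no member of `T`, or non-opposite to exactly one member of `T`. -/
def IsGeometricLine (T : Set Γ.Point) : Prop :=
  ∀ y : Γ.Point, (∀ x ∈ T, ¬ Γ.Opposite y x) ∨ (∃! x, x ∈ T ∧ ¬ Γ.Opposite y x)

end GenHexagon

/-!
Each line `M` carries a projection `p ↦ proj p M` to the nearest point. Suppose no member of `S`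
is collinear to the point `x` of `L`. Then `p₀` and `p₁` are at distance `4` from `x` and reach it
through `L`, so by the girth condition they project to `x` on every other line `M` through `x`.
If all of `S` were at distance `5` from `M`, the projection `S → M` would be onto, because every
point of `M` is non-opposite to some member of `S`, hence injective by counting. So some member of
`S` at distance `4` from `x` reaches `x` through `M`, and therefore projects to `x` on `L`. Two
choices of `M` give two different such members. Consequently `S → L` is onto, hence injective by
counting, which contradicts the existence of `x`.
-/

theorem exists_adj_dist_eq_add_one {V : Type*} {G : SimpleGraph V} {u v : V}
    (h : G.Reachable u v) (hne : u ≠ v) : ∃ w, G.Adj w v ∧ G.dist u v = G.dist u w + 1 := by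
  obtain ⟨p, hp⟩ := h.symm.exists_walk_length_eq_dist
  cases p with
  | nil => exact absurd rfl hne
  | @cons _ w _ hvw p =>
    refine ⟨w, hvw.symm, ?_⟩
    have h_le : G.dist w u ≤ p.length := G.dist_le p
    have h_tri : G.dist v u ≤ G.dist v w + G.dist w u := hvw.reachable.dist_triangle_left u
    rw [SimpleGraph.dist_eq_one_iff_adj.2 hvw] at h_tri
    rw [SimpleGraph.Walk.length_cons] at hp
    rw [G.dist_comm (u := u), G.dist_comm (u := u)]
    lia

theorem eq_of_adj_of_dist_eq_add_one {V : Type*} {G : SimpleGraph V} {u v w w' : V}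
    (hw : G.Adj w v) (hw' : G.Adj w' v) (hgirth : ((2 * G.dist u v : ℕ) : ℕ∞) < G.egirth)
    (hd : G.dist u v = G.dist u w + 1) (hd' : G.dist u v = G.dist u w' + 1) : w = w' := by
  have huv : G.Reachable u v := .of_dist_ne_zero (by lia)
  obtain ⟨p, hp⟩ := (huv.trans hw.symm.reachable).exists_walk_length_eq_dist
  obtain ⟨q, hq⟩ := (huv.trans hw'.symm.reachable).exists_walk_length_eq_dist
  have hpv : (p.concat hw).length = G.dist u v := by rw [SimpleGraph.Walk.length_concat, hp, hd]
  have hqv : (q.concat hw').length = G.dist u v := by rw [SimpleGraph.Walk.length_concat, hq, hd']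
  by_contra hne
  have hpq : p.concat hw ≠ q.concat hw' := fun h => hne (SimpleGraph.Walk.concat_inj h).1
  obtain ⟨_, -, -, c, hc, hlen⟩ :=
    (SimpleGraph.Walk.isPath_of_length_eq_dist _ hpv).exists_isCycle_length_le_add_of_ne
      (SimpleGraph.Walk.isPath_of_length_eq_dist _ hqv) hpq
  rw [hpv, hqv, ← two_mul] at hlen
  exact (hgirth.trans_le (SimpleGraph.egirth_le_length hc)).not_ge (by exact_mod_cast hlen)

theorem even_dist_iff_of_coloring {V : Type*} {G : SimpleGraph V} (c : G.Coloring Bool) {u v : V}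
    (h : G.Reachable u v) : Even (G.dist u v) ↔ (c u ↔ c v) := by
  obtain ⟨p, hp⟩ := h.exists_walk_length_eq_dist
  rw [← hp, c.even_length_iff_congr]

theorem injOn_of_surjOn_of_encard_le {α β : Type*} {f : α → β} {s : Set α} {t : Set β}
    (hs : s.Finite) (hf : Set.SurjOn f s t) (hst : s.encard ≤ t.encard) : Set.InjOn f s :=
  hs.injOn_of_encard_image_eq <|
    (Set.encard_image_le f s).antisymm (hst.trans (Set.encard_le_encard hf))

theorem nontrivial_sdiff_singleton_of_three_le_encard {α : Type*} {s : Set α}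
    (hs : 3 ≤ s.encard) (a : α) : (s \ {a}).Nontrivial := by
  rw [← Set.one_lt_encard_iff_nontrivial]
  calc (1 : ℕ∞) < 3 - 1 := by decide
    _ ≤ s.encard - 1 := tsub_le_tsub_right hs 1
    _ ≤ (s \ {a}).encard := Set.encard_tsub_one_le_encard_sdiff_singleton s a

namespace GenHexagon

variable {Γ : GenHexagon}

theorem Collinear.symm {x y : Γ.Point} (h : Γ.Collinear x y) : Γ.Collinear y x :=
  ⟨h.1.symm, h.2.imp fun _ hL => hL.symm⟩

/-- The distance between two points in the incidence graph, so that collinear points are at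
distance `2` and opposite points at distance `6`. -/
noncomputable def pointDist (x y : Γ.Point) : ℕ :=
  Γ.incGraph.dist (Sum.inl x) (Sum.inl y)

/-- The distance from a point to a line in the incidence graph: `1` if they are incident, and `3`
or `5` otherwise. -/
noncomputable def lineDist (x : Γ.Point) (L : Γ.Line) : ℕ :=
  Γ.incGraph.dist (Sum.inl x) (Sum.inr L)

/-- The bipartition of the incidence graph into points (`true`) and lines (`false`). -/
def incColoring (Γ : GenHexagon) : Γ.incGraph.Coloring Bool :=
  SimpleGraph.Coloring.mk Sum.isLeft (by
    rintro (x | L) (y | M) h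
    · exact h.elim
    · simp
    · simp
    · exact h.elim)

/-- A blocking set: no point is opposite every one of its members. -/
def IsBlocking (S : Set Γ.Point) : Prop :=
  ¬ ∃ y, ∀ x ∈ S, Γ.Opposite y x

theorem pointDist_comm (x y : Γ.Point) : pointDist x y = pointDist y x :=
  SimpleGraph.dist_comm

theorem incGraph_adj_iff {x : Γ.Point} {L : Γ.Line} :
    Γ.incGraph.Adj (Sum.inl x) (Sum.inr L) ↔ x ∈ Γ.pts L :=
  Iff.rfl

theorem lineDist_eq_one_iff {x : Γ.Point} {L : Γ.Line} : lineDist x L = 1 ↔ x ∈ Γ.pts L :=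
  SimpleGraph.dist_eq_one_iff_adj.trans incGraph_adj_iff

namespace IsGenHexagon

theorem preconnected (hΓ : Γ.IsGenHexagon) : Γ.incGraph.Preconnected :=
  SimpleGraph.preconnected_of_ediam_ne_top (by rw [hΓ.1]; decide)

theorem dist_le_six (hΓ : Γ.IsGenHexagon) (u v : Γ.Point ⊕ Γ.Line) : Γ.incGraph.dist u v ≤ 6 :=
  ENat.toNat_le_of_le_natCast (SimpleGraph.edist_le_ediam.trans hΓ.1.le)

theorem even_pointDist (hΓ : Γ.IsGenHexagon) (x y : Γ.Point) : Even (pointDist x y) :=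
  (even_dist_iff_of_coloring Γ.incColoring (hΓ.preconnected _ _)).2 Iff.rfl

theorem odd_lineDist (hΓ : Γ.IsGenHexagon) (x : Γ.Point) (L : Γ.Line) : Odd (lineDist x L) := by
  rw [← Nat.not_even_iff_odd, lineDist,
    even_dist_iff_of_coloring Γ.incColoring (hΓ.preconnected _ _)]
  exact fun h => Bool.false_ne_true (h.1 rfl)

theorem pointDist_eq_zero_iff (hΓ : Γ.IsGenHexagon) {x y : Γ.Point} :
    pointDist x y = 0 ↔ x = y := by
  rw [pointDist, (hΓ.preconnected _ _).dist_eq_zero_iff, Sum.inl.injEq]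

theorem pointDist_cases (hΓ : Γ.IsGenHexagon) (x y : Γ.Point) :
    pointDist x y = 0 ∨ pointDist x y = 2 ∨ pointDist x y = 4 ∨ pointDist x y = 6 := by
  have h_le : pointDist x y ≤ 6 := hΓ.dist_le_six _ _
  have h_even := hΓ.even_pointDist x y
  grind

theorem lineDist_cases (hΓ : Γ.IsGenHexagon) (x : Γ.Point) (L : Γ.Line) :
    lineDist x L = 1 ∨ lineDist x L = 3 ∨ lineDist x L = 5 := by
  have h_le : lineDist x L ≤ 6 := hΓ.dist_le_six _ _
  have h_odd := hΓ.odd_lineDist x L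
  grind

theorem lineDist_eq_or_pointDist_eq (hΓ : Γ.IsGenHexagon) (p : Γ.Point) {x : Γ.Point} {L : Γ.Line}
    (hx : x ∈ Γ.pts L) :
    lineDist p L = pointDist p x + 1 ∨ pointDist p x = lineDist p L + 1 := by
  have h_diff : lineDist p L = pointDist p x ∨ lineDist p L = pointDist p x + 1 ∨
    lineDist p L = pointDist p x - 1 := (incGraph_adj_iff.2 hx).diff_dist_adj
  have h_even := hΓ.even_pointDist p x
  have h_odd := hΓ.odd_lineDist p L
  grind

theorem collinear_iff_pointDist_eq_two (hΓ : Γ.IsGenHexagon) {x y : Γ.Point} :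
    Γ.Collinear x y ↔ pointDist x y = 2 := by
  have hedist : Γ.incGraph.edist (Sum.inl x) (Sum.inl y) = 2 ↔ pointDist x y = 2 := by
    rw [pointDist, ← (hΓ.preconnected _ _).coe_dist_eq_edist]
    norm_cast
  rw [← hedist, SimpleGraph.edist_eq_two_iff]
  refine ⟨fun ⟨hne, L, hx, hy⟩ => ⟨mt Sum.inl_injective.eq_iff.1 hne, id, Sum.inr L, hx, hy⟩, ?_⟩
  rintro ⟨hne, -, z | L, hx, hy⟩
  · exact hx.elim
  · exact ⟨fun h => hne (congrArg _ h), L, hx, hy⟩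

theorem opposite_of_pointDist_eq_six (hΓ : Γ.IsGenHexagon) {x y : Γ.Point} (h : pointDist x y = 6) :
    Γ.Opposite x y := by
  refine ⟨fun hxy => ?_, fun hxy => ?_, ?_⟩
  · rw [hΓ.pointDist_eq_zero_iff.2 hxy] at h
    lia
  · rw [hΓ.collinear_iff_pointDist_eq_two.1 hxy] at h
    lia
  · rintro ⟨-, -, z, hxz, hyz⟩
    have hxz2 := hΓ.collinear_iff_pointDist_eq_two.1 hxz
    have hzy2 := hΓ.collinear_iff_pointDist_eq_two.1 hyz.symm
    have h_tri : pointDist x y ≤ pointDist x z + pointDist z y :=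
      (hΓ.preconnected _ _).dist_triangle_left _
    lia

theorem eq_of_adj_of_dist_lt_six (hΓ : Γ.IsGenHexagon) {u v w w' : Γ.Point ⊕ Γ.Line}
    (hw : Γ.incGraph.Adj w v) (hw' : Γ.incGraph.Adj w' v) (h : Γ.incGraph.dist u v < 6)
    (hd : Γ.incGraph.dist u v = Γ.incGraph.dist u w + 1)
    (hd' : Γ.incGraph.dist u v = Γ.incGraph.dist u w' + 1) : w = w' := by
  refine eq_of_adj_of_dist_eq_add_one hw hw' ?_ hd hd'
  rw [hΓ.2]
  exact_mod_cast (by lia : 2 * Γ.incGraph.dist u v < 12)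

theorem exists_lineDist_eq_add_one (hΓ : Γ.IsGenHexagon) (p : Γ.Point) (L : Γ.Line) :
    ∃ x ∈ Γ.pts L, lineDist p L = pointDist p x + 1 := by
  obtain ⟨x | M, hadj, hd⟩ :=
    exists_adj_dist_eq_add_one (hΓ.preconnected (Sum.inl p) (Sum.inr L)) Sum.inl_ne_inr
  · exact ⟨x, hadj, hd⟩
  · exact hadj.elim

/-- The projection of a point to a line: the point of the line nearest to it. -/
noncomputable def proj (hΓ : Γ.IsGenHexagon) (p : Γ.Point) (L : Γ.Line) : Γ.Point :=
  (hΓ.exists_lineDist_eq_add_one p L).choose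

theorem proj_mem (hΓ : Γ.IsGenHexagon) (p : Γ.Point) (L : Γ.Line) : hΓ.proj p L ∈ Γ.pts L :=
  (hΓ.exists_lineDist_eq_add_one p L).choose_spec.1

theorem lineDist_eq_pointDist_proj_add_one (hΓ : Γ.IsGenHexagon) (p : Γ.Point) (L : Γ.Line) :
    lineDist p L = pointDist p (hΓ.proj p L) + 1 :=
  (hΓ.exists_lineDist_eq_add_one p L).choose_spec.2

theorem proj_eq_iff (hΓ : Γ.IsGenHexagon) {p x : Γ.Point} {L : Γ.Line} (hx : x ∈ Γ.pts L) :
    hΓ.proj p L = x ↔ lineDist p L = pointDist p x + 1 := by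
  refine ⟨fun h => h ▸ hΓ.lineDist_eq_pointDist_proj_add_one p L, fun h => ?_⟩
  have h_lt : lineDist p L < 6 := by
    have := hΓ.lineDist_cases p L
    lia
  exact Sum.inl_injective <| hΓ.eq_of_adj_of_dist_lt_six (incGraph_adj_iff.2 (hΓ.proj_mem p L))
    (incGraph_adj_iff.2 hx) h_lt (hΓ.lineDist_eq_pointDist_proj_add_one p L) h

theorem pointDist_eq_lineDist_add_one_iff (hΓ : Γ.IsGenHexagon) {p x : Γ.Point} {L : Γ.Line}
    (hx : x ∈ Γ.pts L) : pointDist p x = lineDist p L + 1 ↔ hΓ.proj p L ≠ x := by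
  have := hΓ.lineDist_eq_or_pointDist_eq p hx
  rw [Ne, hΓ.proj_eq_iff hx]
  lia

theorem proj_eq_or_proj_eq (hΓ : Γ.IsGenHexagon) {p x : Γ.Point} {L M : Γ.Line}
    (hL : x ∈ Γ.pts L) (hM : x ∈ Γ.pts M) (hne : L ≠ M) (hx : pointDist p x < 6) :
    hΓ.proj p L = x ∨ hΓ.proj p M = x := by
  by_contra! h
  exact hne <| Sum.inr_injective <| hΓ.eq_of_adj_of_dist_lt_six (incGraph_adj_iff.2 hL).symm
    (incGraph_adj_iff.2 hM).symm hx
    ((hΓ.pointDist_eq_lineDist_add_one_iff hL).2 h.1)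
    ((hΓ.pointDist_eq_lineDist_add_one_iff hM).2 h.2)

theorem proj_eq_of_lineDist_eq_three (hΓ : Γ.IsGenHexagon) {p x : Γ.Point} {L M : Γ.Line}
    (hL : x ∈ Γ.pts L) (hM : x ∈ Γ.pts M) (hne : L ≠ M) (hpL : lineDist p L = 3)
    (hpx : 4 ≤ pointDist p x) : hΓ.proj p M = x := by
  have h_flag := hΓ.lineDist_eq_or_pointDist_eq p hL
  refine (hΓ.proj_eq_or_proj_eq hL hM hne (by lia)).resolve_left ?_
  rw [hΓ.proj_eq_iff hL]
  lia

theorem collinear_iff_lineDist_eq_and_proj_eq (hΓ : Γ.IsGenHexagon) {p x : Γ.Point} {L : Γ.Line}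
    (hp : p ∉ Γ.pts L) (hx : x ∈ Γ.pts L) :
    Γ.Collinear p x ↔ lineDist p L = 3 ∧ hΓ.proj p L = x := by
  have h_ne_one := mt lineDist_eq_one_iff.1 hp
  have h_flag := hΓ.lineDist_eq_or_pointDist_eq p hx
  rw [hΓ.collinear_iff_pointDist_eq_two, hΓ.proj_eq_iff hx]
  lia

theorem closeTo_iff_lineDist_eq_three (hΓ : Γ.IsGenHexagon) {p : Γ.Point} {L : Γ.Line}
    (hp : p ∉ Γ.pts L) : Γ.CloseTo p L ↔ lineDist p L = 3 := by
  constructor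
  · rintro ⟨x, ⟨hx, hpx⟩, -⟩
    exact ((hΓ.collinear_iff_lineDist_eq_and_proj_eq hp hx).1 hpx).1
  · intro h
    have hproj := hΓ.proj_mem p L
    exact ⟨hΓ.proj p L, ⟨hproj, (hΓ.collinear_iff_lineDist_eq_and_proj_eq hp hproj).2 ⟨h, rfl⟩⟩,
      fun x ⟨hx, hpx⟩ => ((hΓ.collinear_iff_lineDist_eq_and_proj_eq hp hx).1 hpx).2.symm⟩

theorem four_le_pointDist (hΓ : Γ.IsGenHexagon) {p x : Γ.Point} (hne : p ≠ x)
    (hpx : ¬ Γ.Collinear p x) : 4 ≤ pointDist p x := by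
  have h_cases := hΓ.pointDist_cases p x
  rw [← hΓ.pointDist_eq_zero_iff.ne] at hne
  rw [hΓ.collinear_iff_pointDist_eq_two] at hpx
  lia

end IsGenHexagon

namespace IsBlocking

variable {S : Set Γ.Point}

theorem injOn_proj (hS : IsBlocking S) (hfin : S.Finite) (hΓ : Γ.IsGenHexagon)
    {M : Γ.Line} (hcard : S.encard ≤ (Γ.pts M).encard)
    (hM : ∀ p ∈ S, lineDist p M = 5) : Set.InjOn (hΓ.proj · M) S := by
  refine injOn_of_surjOn_of_encard_le hfin (fun y hy => ?_) hcard
  by_contra hy_notMem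
  refine hS ⟨y, fun p hp => hΓ.opposite_of_pointDist_eq_six ?_⟩
  have hpy : hΓ.proj p M ≠ y := fun h => hy_notMem ⟨p, hp, h⟩
  rw [pointDist_comm, (hΓ.pointDist_eq_lineDist_add_one_iff hy).2 hpy, hM p hp]

theorem exists_proj_ne (hS : IsBlocking S) (hfin : S.Finite) (hΓ : Γ.IsGenHexagon)
    {M : Γ.Line} (hcard : S.encard ≤ (Γ.pts M).encard) {x : Γ.Point}
    (hx : x ∈ Γ.pts M) (hfar : ∀ p ∈ S, 4 ≤ pointDist p x)
    (hninj : ¬ Set.InjOn (hΓ.proj · M) S) :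
    ∃ p ∈ S, pointDist p x = 4 ∧ hΓ.proj p M ≠ x := by
  by_contra! hproj
  refine hninj (hS.injOn_proj hfin hΓ hcard fun p hp => ?_)
  have h_flag := hΓ.lineDist_eq_or_pointDist_eq p hx
  have h_line := hΓ.lineDist_cases p M
  have h_point := hΓ.pointDist_cases p x
  have h_far := hfar p hp
  have h_near := fun h : pointDist p x = 4 => (hΓ.proj_eq_iff hx).1 (hproj p hp h)
  lia

theorem exists_pair_proj_eq (hS : IsBlocking S) (hfin : S.Finite) (hΓ : Γ.IsGenHexagon)
    (hcard : ∀ M, S.encard ≤ (Γ.pts M).encard) {x : Γ.Point}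
    (hlines : 3 ≤ {M | x ∈ Γ.pts M}.encard) (hfar : ∀ p ∈ S, 4 ≤ pointDist p x)
    {L : Γ.Line} (hx : x ∈ Γ.pts L) {p₀ p₁ : Γ.Point} (hp₀ : p₀ ∈ S) (hp₁ : p₁ ∈ S)
    (hne : p₀ ≠ p₁) (h₀ : lineDist p₀ L = 3) (h₁ : lineDist p₁ L = 3) :
    ∃ p ∈ S, ∃ q ∈ S, p ≠ q ∧ hΓ.proj p L = x ∧ hΓ.proj q L = x := by
  have hthrough : ∀ M, x ∈ Γ.pts M → L ≠ M →
      ∃ p ∈ S, pointDist p x = 4 ∧ hΓ.proj p M ≠ x := fun M hM hLM =>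
    hS.exists_proj_ne hfin hΓ (hcard M) hM hfar fun hinj => hne <| hinj hp₀ hp₁ <|
      (hΓ.proj_eq_of_lineDist_eq_three hx hM hLM h₀ (hfar p₀ hp₀)).trans
        (hΓ.proj_eq_of_lineDist_eq_three hx hM hLM h₁ (hfar p₁ hp₁)).symm
  obtain ⟨M, ⟨hM, hML⟩, N, ⟨hN, hNL⟩, hMN⟩ := nontrivial_sdiff_singleton_of_three_le_encard hlines L
  obtain ⟨p, hp, hpx, hpM⟩ := hthrough M hM (Ne.symm hML)
  obtain ⟨q, hq, hqx, hqN⟩ := hthrough N hN (Ne.symm hNL)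
  refine ⟨p, hp, q, hq, ?_, (hΓ.proj_eq_or_proj_eq hx hM (Ne.symm hML) (by lia)).resolve_right hpM,
    (hΓ.proj_eq_or_proj_eq hx hN (Ne.symm hNL) (by lia)).resolve_right hqN⟩
  rintro rfl
  exact (hΓ.proj_eq_or_proj_eq hM hN hMN (by lia)).elim hpM hqN

end IsBlocking

end GenHexagon

theorem claim3_close_line_general {Γ : GenHexagon} (hΓ : Γ.IsGenHexagon)
    (hlines : ∀ x, 3 ≤ {M | x ∈ Γ.pts M}.encard) {S : Set Γ.Point} (hfin : S.Finite)
    (hcard : ∀ M, S.encard ≤ (Γ.pts M).encard) (hblock : GenHexagon.IsBlocking S)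
    {p₀ p₁ : Γ.Point} (hp₀ : p₀ ∈ S) (hp₁ : p₁ ∈ S) (hne : p₀ ≠ p₁)
    {L : Γ.Line} (hc₀ : Γ.CloseTo p₀ L) (hc₁ : Γ.CloseTo p₁ L) (hLS : ∀ p ∈ S, p ∉ Γ.pts L) :
    (∀ p ∈ S, Γ.CloseTo p L) ∧ (∀ x ∈ Γ.pts L, ∃! p, p ∈ S ∧ Γ.Collinear x p) := by
  have hcol {p x} (hp : p ∈ S) (hx : x ∈ Γ.pts L) :=
    hΓ.collinear_iff_lineDist_eq_and_proj_eq (hLS p hp) hx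
  have hpair : ∀ x ∈ Γ.pts L, (∀ p ∈ S, ¬ Γ.Collinear p x) →
      ∃ p ∈ S, ∃ q ∈ S, p ≠ q ∧ hΓ.proj p L = x ∧ hΓ.proj q L = x := fun x hx hno =>
    hblock.exists_pair_proj_eq hfin hΓ hcard (hlines x)
      (fun p hp => hΓ.four_le_pointDist (ne_of_mem_of_not_mem hx (hLS p hp)).symm (hno p hp))
      hx hp₀ hp₁ hne ((hΓ.closeTo_iff_lineDist_eq_three (hLS p₀ hp₀)).1 hc₀)
      ((hΓ.closeTo_iff_lineDist_eq_three (hLS p₁ hp₁)).1 hc₁)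
  have hinj : Set.InjOn (hΓ.proj · L) S := by
    refine injOn_of_surjOn_of_encard_le hfin (fun x hx => ?_) (hcard L)
    by_cases hno : ∀ p ∈ S, ¬ Γ.Collinear p x
    · obtain ⟨p, hp, -, -, -, hpx, -⟩ := hpair x hx hno
      exact ⟨p, hp, hpx⟩
    · push Not at hno
      obtain ⟨p, hp, hpx⟩ := hno
      exact ⟨p, hp, ((hcol hp hx).1 hpx).2⟩
  have hex : ∀ x ∈ Γ.pts L, ∃ p ∈ S, Γ.Collinear p x := by
    by_contra! ⟨x, hx, hno⟩
    obtain ⟨p, hp, q, hq, hpq, hpx, hqx⟩ := hpair x hx hno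
    exact hpq (hinj hp hq (hpx.trans hqx.symm))
  refine ⟨fun p hp => ?_, fun x hx => ?_⟩
  · obtain ⟨q, hq, hqp⟩ := hex _ (hΓ.proj_mem p L)
    have hqp' := (hcol hq (hΓ.proj_mem p L)).1 hqp
    obtain rfl : q = p := hinj hq hp hqp'.2
    exact (hΓ.closeTo_iff_lineDist_eq_three (hLS q hq)).2 hqp'.1
  · obtain ⟨p, hp, hpx⟩ := hex x hx
    exact ⟨p, ⟨hp, hpx.symm⟩, fun q ⟨hq, hxq⟩ =>
      hinj hq hp (((hcol hq hx).1 hxq.symm).2.trans ((hcol hp hx).1 hpx).2.symm)⟩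

/-- Claim 3 in the proof: if `p₀, p₁ ∈ S` are opposite and a line `L` close to both
contains no point of `S`, then every point of `S` is close to `L` and every point of `L`
is collinear to exactly one point of `S`. -/
theorem claim3_close_line (Γ : GenHexagon) (hΓ : Γ.IsGenHexagon)
    (s t : ℕ) (hs : 1 < s) (ht : 1 < t) (hord : Γ.HasOrder s t)
    (S : Set Γ.Point) (hS : S.encard = s + 1)
    (hblock : ¬ ∃ y : Γ.Point, ∀ x ∈ S, Γ.Opposite y x)
    (p₀ p₁ : Γ.Point) (hp₀ : p₀ ∈ S) (hp₁ : p₁ ∈ S) (hopp : Γ.Opposite p₀ p₁)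
    (L : Γ.Line) (hc₀ : Γ.CloseTo p₀ L) (hc₁ : Γ.CloseTo p₁ L)
    (hLS : ∀ p ∈ S, p ∉ Γ.pts L) :
    (∀ p ∈ S, Γ.CloseTo p L) ∧ (∀ x ∈ Γ.pts L, ∃! p, p ∈ S ∧ Γ.Collinear x p) := by
  exact claim3_close_line_general hΓ
    (fun x => by rw [hord.2 x]; exact_mod_cast (by lia : 3 ≤ t + 1))
    (Set.finite_of_encard_eq_coe (k := s + 1) (by exact_mod_cast hS))
    (fun M => (hS.trans (hord.1 M).symm).le) hblock hp₀ hp₁ hopp.1 hc₀ hc₁ hLS
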